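/- Let condition B hold, let v_ε be positive numbers with v_ε → ∞ as ε → 0, and suppose condition D₁ holds. Then, for any family of initial distributions q̄_ε, the processes κ_ε(t) converge in finite-dimensional distributions to a nonnegative Lévy process θ₀(t) with E e^{−sθ₀(t)} = e^{−tA(s)}: for any 0 = t₀ ≤ t₁ ≤ … ≤ t_n < ∞ and s₁, …, s_n ≥ 0, E exp{−Σ_{r=1}^n s_r (κ_ε(t_r) − κ_ε(t_{r−1}))} → exp{−Σ_{r=1}^n A(s_r)(t_r − t_{r−1})} as ε → 0. -/

import Mathlib

open MeasureTheory Filter Set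
open scoped Topology ENNReal

noncomputable section

/-- Condition B: there exists a ring chain of states `c 0, c 1, …, c N = c 0`
containing all states of the phase space, with
`liminf_{ε→0+} p ε (c (k-1)) (c k) > 0` for `k = 1, …, N`. -/
def CondB {m : ℕ} (p : ℝ → Fin m → Fin m → ℝ) : Prop :=
  ∃ N : ℕ, 0 < N ∧ ∃ c : ℕ → Fin m, c N = c 0 ∧
    (∀ i : Fin m, ∃ k ≤ N, c k = i) ∧
    ∀ k < N, 0 < Filter.liminf (fun ε => p ε (c k) (c (k + 1))) (𝓝[>] (0 : ℝ))

/-- `π` is a stationary distribution of the transition matrix `p`. -/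
def IsStationaryDist {m : ℕ} (p : Fin m → Fin m → ℝ) (π : Fin m → ℝ) : Prop :=
  (∀ i, 0 ≤ π i) ∧ (∑ i, π i = 1) ∧ ∀ j, π j = ∑ i, π i * p i j

/-- The step-sum reward process `κ_ε(t) = Σ_{n=1}^{[t v_ε]} κ_{ε,n}`. -/
def stepSum {Ω : Type} (κ : ℝ → ℕ → Ω → ℝ) (v : ℝ → ℝ) (ε t : ℝ) (ω : Ω) : ℝ :=
  ∑ n ∈ Finset.Icc 1 (Nat.floor (t * v ε)), κ ε n ω

/-- Action of a matrix on a vector. -/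
def Kop {m : ℕ} (M : Fin m → Fin m → ℝ) (w : Fin m → ℝ) : Fin m → ℝ :=
  fun i => ∑ j, M i j * w j

/-- Substochastic matrices. -/
def SubSt {m : ℕ} (M : Fin m → Fin m → ℝ) : Prop :=
  (∀ i j, 0 ≤ M i j) ∧ ∀ i, ∑ j, M i j ≤ 1

lemma Kop_bound {m : ℕ} {M : Fin m → Fin m → ℝ} (hM : SubSt M) {w : Fin m → ℝ} {B : ℝ}
    (hB : 0 ≤ B) (hw : ∀ i, |w i| ≤ B) (i : Fin m) : |Kop M w i| ≤ B := by
  unfold Kop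
  calc |∑ j, M i j * w j| ≤ ∑ j, |M i j * w j| := Finset.abs_sum_le_sum_abs _ _
    _ ≤ ∑ j, M i j * B := by
        apply Finset.sum_le_sum
        intro j _
        rw [abs_mul, abs_of_nonneg (hM.1 i j)]
        exact mul_le_mul_of_nonneg_left (hw j) (hM.1 i j)
    _ = (∑ j, M i j) * B := by rw [Finset.sum_mul]
    _ ≤ 1 * B := mul_le_mul_of_nonneg_right (hM.2 i) hB
    _ = B := one_mul B

lemma Kop_lin {m : ℕ} (M : Fin m → Fin m → ℝ) (a b : ℝ) (w z : Fin m → ℝ) :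
    Kop M (fun i => a * w i + b * z i) = fun i => a * Kop M w i + b * Kop M z i := by
  funext i
  simp only [Kop, Finset.mul_sum, ← Finset.sum_add_distrib]
  exact Finset.sum_congr rfl fun j _ => by ring

lemma Kop_iter_lin {m : ℕ} (M : Fin m → Fin m → ℝ) (a b : ℝ) (w z : Fin m → ℝ) (n : ℕ) :
    (Kop M)^[n] (fun i => a * w i + b * z i)
      = fun i => a * (Kop M)^[n] w i + b * (Kop M)^[n] z i := by
  induction n with
  | zero => rfl
  | succ n ih => rw [Function.iterate_succ_apply', ih, Kop_lin,
      Function.iterate_succ_apply', Function.iterate_succ_apply']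

lemma Kop_iter_bound {m : ℕ} {M : Fin m → Fin m → ℝ} (hM : SubSt M) {w : Fin m → ℝ} {B : ℝ}
    (hB : 0 ≤ B) (hw : ∀ i, |w i| ≤ B) (n : ℕ) (i : Fin m) : |(Kop M)^[n] w i| ≤ B := by
  induction n generalizing i with
  | zero => exact hw i
  | succ n ih => rw [Function.iterate_succ_apply']; exact Kop_bound hM hB ih i

/-- Perturbation estimate. -/
lemma Kop_pert {m : ℕ} {M : Fin m → Fin m → ℝ} (hM : SubSt M) {h : Fin m → ℝ} {c E : ℝ}
    (hc0 : 0 ≤ c) (hc1 : c ≤ 1) (hE : 0 ≤ E)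
    (hh : ∀ i, |Kop M h i - c * h i| ≤ E) (n : ℕ) (i : Fin m) :
    |(Kop M)^[n] h i - c ^ n * h i| ≤ n * E := by
  induction n generalizing i with
  | zero => simp
  | succ n ih =>
    rw [Function.iterate_succ_apply']
    have h1 := Kop_bound hM (w := fun i => (Kop M)^[n] h i - c ^ n * h i)
      (by positivity : (0:ℝ) ≤ n * E) ih i
    have h2 : Kop M (fun i => (Kop M)^[n] h i - c ^ n * h i) i
        = Kop M ((Kop M)^[n] h) i - c ^ n * Kop M h i := by
      have := congrFun (Kop_lin M 1 (-(c^n)) ((Kop M)^[n] h) h) i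
      simp only [one_mul, neg_mul] at this
      simpa [sub_eq_add_neg] using this
    rw [h2] at h1
    have h3 : Kop M ((Kop M)^[n] h) i - c ^ (n+1) * h i
        = (Kop M ((Kop M)^[n] h) i - c ^ n * Kop M h i) + c ^ n * (Kop M h i - c * h i) := by
      ring
    rw [h3]
    have h4 : |c ^ n * (Kop M h i - c * h i)| ≤ E := by
      rw [abs_mul, abs_of_nonneg (pow_nonneg hc0 n)]
      calc c ^ n * |Kop M h i - c * h i| ≤ 1 * E :=
            mul_le_mul (pow_le_one₀ hc0 hc1) (hh i) (abs_nonneg _) zero_le_one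
        _ = E := one_mul E
    calc _ ≤ _ := abs_add_le _ _
      _ ≤ n * E + E := add_le_add h1 h4
      _ = _ := by push_cast; ring

/-- Main estimate for powers of a substochastic matrix dominated by a stochastic matrix. -/
lemma pow_est {m : ℕ} (p M : Fin m → Fin m → ℝ) (π : Fin m → ℝ)
    (hp1 : ∀ i, ∑ j, p i j = 1)
    (hM0 : ∀ i j, 0 ≤ M i j) (hMp : ∀ i j, M i j ≤ p i j)
    (hπ : IsStationaryDist p π) (ρ C : ℝ) (hρ : 0 < ρ) (hC : 0 ≤ C)
    (hρπ : ∀ i, ρ ≤ π i)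
    (hPoi : ∀ f : Fin m → ℝ, ∀ B, 0 ≤ B → (∀ i, |f i| ≤ B) → ∑ i, π i * f i = 0 →
      ∃ g : Fin m → ℝ, (∀ i, g i - ∑ j, p i j * g j = f i) ∧ ∀ i, |g i| ≤ C * B)
    (b : ℝ) (hb : b = 1 - ∑ i, π i * ∑ j, M i j) (n : ℕ) (i : Fin m) :
    0 ≤ b ∧ b ≤ 1 ∧
    |(Kop M)^[n] (fun _ => 1) i - (1 - b) ^ n|
      ≤ n * (2 * C * (b / ρ) ^ 2) + 2 * C * (b / ρ) := by
  obtain ⟨hπ0, hπ1, hπs⟩ := hπ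
  set d : Fin m → ℝ := fun i => 1 - ∑ j, M i j with hd
  have hrow : ∀ i, ∑ j, M i j ≤ 1 := fun i => by
    rw [← hp1 i]; exact Finset.sum_le_sum fun j _ => hMp i j
  have hM : SubSt M := ⟨hM0, hrow⟩
  have hd0 : ∀ i, 0 ≤ d i := fun i => by simp only [hd]; linarith [hrow i]
  have hd1 : ∀ i, d i ≤ 1 := fun i => by
    have := Finset.sum_nonneg fun j (_ : j ∈ Finset.univ) => hM0 i j
    simp only [hd]; linarith
  have hbd : b = ∑ i, π i * d i := by
    simp only [hd, mul_sub, mul_one, Finset.sum_sub_distrib, hπ1, hb]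
  have hb0 : 0 ≤ b := by
    rw [hbd]; exact Finset.sum_nonneg fun i _ => mul_nonneg (hπ0 i) (hd0 i)
  have hb1 : b ≤ 1 := by
    rw [hbd, ← hπ1]
    exact Finset.sum_le_sum fun i _ => mul_le_of_le_one_right (hπ0 i) (hd1 i)
  refine ⟨hb0, hb1, ?_⟩
  set β := b / ρ with hβ
  have hβ0 : 0 ≤ β := by positivity
  have hdβ : ∀ i, d i ≤ β := fun i => by
    rw [hβ, le_div_iff₀ hρ]
    calc d i * ρ ≤ d i * π i := mul_le_mul_of_nonneg_left (hρπ i) (hd0 i)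
      _ = π i * d i := mul_comm _ _
      _ ≤ b := by
        rw [hbd]
        exact Finset.single_le_sum (f := fun i => π i * d i)
          (fun i _ => mul_nonneg (hπ0 i) (hd0 i)) (Finset.mem_univ i)
  have hbβ : b ≤ β := by
    calc b = ∑ i, π i * d i := hbd
      _ ≤ ∑ i, π i * β := Finset.sum_le_sum fun i _ => mul_le_mul_of_nonneg_left (hdβ i) (hπ0 i)
      _ = β := by rw [← Finset.sum_mul, hπ1, one_mul]
  obtain ⟨g, hg, hgB⟩ := hPoi (fun i => b - d i) β hβ0
    (fun i => by rw [abs_le]; constructor <;> linarith [hd0 i, hdβ i])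
    (by simp only [mul_sub, Finset.sum_sub_distrib, ← Finset.sum_mul, hπ1, one_mul, ← hbd, sub_self])
  have hCβ : 0 ≤ C * β := mul_nonneg hC hβ0
  have hkey : ∀ i, |Kop M (fun i => 1 * 1 + 1 * g i) i - (1 - b) * (1 * 1 + 1 * g i)|
      ≤ 2 * C * β ^ 2 := by
    intro i
    have e1 : Kop M (fun i => 1 * 1 + 1 * g i) i - (1 - b) * (1 * 1 + 1 * g i)
        = b * g i - ∑ j, (p i j - M i j) * g j := by
      have h1 := hg i
      simp only [Kop, hd] at h1 ⊢
      simp only [one_mul, mul_add, mul_one, Finset.sum_add_distrib, sub_mul,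
        Finset.sum_sub_distrib]
      linarith
    rw [e1]
    have e2 : |b * g i| ≤ β * (C * β) := by
      rw [abs_mul, abs_of_nonneg hb0]
      exact mul_le_mul hbβ (hgB i) (abs_nonneg _) hβ0
    have e3 : |∑ j, (p i j - M i j) * g j| ≤ β * (C * β) := by
      calc _ ≤ ∑ j, |(p i j - M i j) * g j| := Finset.abs_sum_le_sum_abs _ _
        _ ≤ ∑ j, (p i j - M i j) * (C * β) := by
          apply Finset.sum_le_sum
          intro j _
          rw [abs_mul, abs_of_nonneg (sub_nonneg.2 (hMp i j))]
          exact mul_le_mul_of_nonneg_left (hgB j) (sub_nonneg.2 (hMp i j))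
        _ = d i * (C * β) := by
          rw [← Finset.sum_mul, Finset.sum_sub_distrib, hp1]
        _ ≤ _ := mul_le_mul_of_nonneg_right (hdβ i) hCβ
    calc _ ≤ _ := abs_sub _ _
      _ ≤ β * (C * β) + β * (C * β) := add_le_add e2 e3
      _ = _ := by ring
  have h1 := Kop_pert hM (sub_nonneg.2 hb1) (by linarith) (by positivity) hkey n i
  rw [Kop_iter_lin] at h1
  have h2 := Kop_iter_bound hM hCβ hgB n i
  have h3 : |(1 - b) ^ n * g i| ≤ C * β := by
    rw [abs_mul, abs_of_nonneg (pow_nonneg (sub_nonneg.2 hb1) n)]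
    calc _ ≤ 1 * (C * β) := mul_le_mul (pow_le_one₀ (sub_nonneg.2 hb1) (by linarith)) (hgB i)
            (abs_nonneg _) zero_le_one
      _ = _ := one_mul _
  rw [abs_le] at *
  constructor <;> nlinarith

/-- Edges of the ring chain. -/
def ringE {m : ℕ} (N : ℕ) (c : ℕ → Fin m) (i j : Fin m) : Prop :=
  ∃ k < N, c k = i ∧ c (k + 1) = j

lemma ring_conn {m : ℕ} {N : ℕ} {c : ℕ → Fin m} (hN : c N = c 0)
    (hall : ∀ i, ∃ k ≤ N, c k = i) (x y : Fin m) : Relation.ReflTransGen (ringE N c) x y := by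
  have h0 : ∀ k ≤ N, Relation.ReflTransGen (ringE N c) (c 0) (c k) := by
    intro k
    induction k with
    | zero => intro _; exact .refl
    | succ k ih => intro hk; exact (ih (by omega)).tail ⟨k, by omega, rfl, rfl⟩
  have h1 : ∀ l k, k + l = N → Relation.ReflTransGen (ringE N c) (c k) (c N) := by
    intro l
    induction l with
    | zero => rintro k rfl; exact .refl
    | succ l ih => intro k hk; exact (ih (k+1) (by omega)).head ⟨k, by omega, rfl, rfl⟩
  obtain ⟨a, ha, rfl⟩ := hall x
  obtain ⟨b, hb, rfl⟩ := hall y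
  have := h1 (N - a) a (by omega)
  rw [hN] at this
  exact this.trans (h0 b hb)

lemma pi_lower {m : ℕ} {E : Fin m → Fin m → Prop} {δ : ℝ} (hδ : 0 < δ) {x y : Fin m}
    (h : Relation.ReflTransGen E x y) :
    ∃ c : ℝ, 0 < c ∧ ∀ (p : Fin m → Fin m → ℝ) (π : Fin m → ℝ),
      (∀ i j, 0 ≤ p i j) → (∀ i j, E i j → δ ≤ p i j) → IsStationaryDist p π →
      c * π x ≤ π y := by
  induction h with
  | refl => exact ⟨1, one_pos, fun p π _ _ _ => by simp⟩
  | @tail y z _ hyz ih =>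
    obtain ⟨c, hc, ih⟩ := ih
    refine ⟨c * δ, by positivity, fun p π hp hE hπ => ?_⟩
    have h1 := ih p π hp hE hπ
    calc c * δ * π x = (c * π x) * δ := by ring
      _ ≤ π y * p y z := mul_le_mul h1 (hE _ _ hyz) hδ.le (hπ.1 y)
      _ ≤ ∑ i, π i * p i z := Finset.single_le_sum (f := fun i => π i * p i z)
          (fun i _ => mul_nonneg (hπ.1 i) (hp i z)) (Finset.mem_univ y)
      _ = π z := (hπ.2.2 z).symm

lemma osc_bound {m : ℕ} {E : Fin m → Fin m → Prop} {δ : ℝ} (hδ : 0 < δ) {x y : Fin m}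
    (h : Relation.ReflTransGen E x y) :
    ∃ C : ℝ, 0 ≤ C ∧ ∀ (p : Fin m → Fin m → ℝ) (g : Fin m → ℝ) (B : ℝ),
      (∀ i j, 0 ≤ p i j) → (∀ i, ∑ j, p i j = 1) → (∀ i j, E i j → δ ≤ p i j) → 0 ≤ B →
      (∀ i, |g i - ∑ j, p i j * g j| ≤ B) → (∀ i, g i ≤ g x) →
      g x - g y ≤ C * B := by
  induction h with
  | refl => exact ⟨0, le_rfl, fun p g B _ _ _ _ _ _ => by simp⟩
  | @tail y z _ hyz ih =>
    obtain ⟨C, hC, ih⟩ := ih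
    refine ⟨(C + 1) / δ, by positivity, fun p g B hp hp1 hE hB hg hmax => ?_⟩
    have h1 := ih p g B hp hp1 hE hB hg hmax
    have h2 : ∑ j, p y j * (g x - g j) = g x - ∑ j, p y j * g j := by
      simp only [mul_sub, Finset.sum_sub_distrib, ← Finset.sum_mul, hp1, one_mul]
    have h3 : p y z * (g x - g z) ≤ ∑ j, p y j * (g x - g j) :=
      Finset.single_le_sum (f := fun j => p y j * (g x - g j))
          (fun i _ => mul_nonneg (hp y i) (sub_nonneg.2 (hmax i))) (Finset.mem_univ z)
    have h4 := (abs_le.1 (hg y)).2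
    have h5 : δ * (g x - g z) ≤ p y z * (g x - g z) :=
      mul_le_mul_of_nonneg_right (hE _ _ hyz) (sub_nonneg.2 (hmax z))
    rw [div_mul_eq_mul_div, le_div_iff₀ hδ]
    nlinarith

/-- Uniform ergodicity constants. -/
lemma ergodic_consts {m : ℕ} (hm : 0 < m) {E : Fin m → Fin m → Prop} {δ : ℝ} (hδ : 0 < δ)
    (hcon : ∀ x y, Relation.ReflTransGen E x y) :
    ∃ ρ C : ℝ, 0 < ρ ∧ 0 ≤ C ∧ ∀ (p : Fin m → Fin m → ℝ) (π : Fin m → ℝ),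
      (∀ i j, 0 ≤ p i j) → (∀ i, ∑ j, p i j = 1) → (∀ i j, E i j → δ ≤ p i j) →
      IsStationaryDist p π →
      (∀ i, ρ ≤ π i) ∧
      ∀ f : Fin m → ℝ, ∀ B, 0 ≤ B → (∀ i, |f i| ≤ B) → ∑ i, π i * f i = 0 →
      ∃ g : Fin m → ℝ, (∀ i, g i - ∑ j, p i j * g j = f i) ∧ ∀ i, |g i| ≤ C * B := by
  have : Nonempty (Fin m) := ⟨⟨0, hm⟩⟩
  choose c hc hcp using fun x y => pi_lower hδ (hcon x y)
  choose K hK hKp using fun x y => osc_bound hδ (hcon x y)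
  obtain ⟨⟨x0, y0⟩, hxy⟩ := Finite.exists_min (fun z : Fin m × Fin m => c z.1 z.2)
  have hm' : (0:ℝ) < m := by exact_mod_cast hm
  refine ⟨c x0 y0 / m, ∑ x, ∑ y, K x y, by have := hc x0 y0; positivity,
    Finset.sum_nonneg fun x _ => Finset.sum_nonneg fun y _ => hK x y,
    fun p π hp hp1 hE hπ => ?_⟩
  set C := ∑ x, ∑ y, K x y with hCdef
  have hKC : ∀ x y, K x y ≤ C := fun x y =>
    (Finset.single_le_sum (f := fun y => K x y) (fun y _ => hK x y) (Finset.mem_univ y)).trans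
    (Finset.single_le_sum (f := fun x => ∑ y, K x y)
      (fun x _ => Finset.sum_nonneg fun y _ => hK x y) (Finset.mem_univ x))
  have hosc : ∀ (g : Fin m → ℝ) (B : ℝ), 0 ≤ B → (∀ i, |g i - ∑ j, p i j * g j| ≤ B) →
      ∀ i j, g i - g j ≤ C * B := by
    intro g B hB hg i j
    obtain ⟨x, hx⟩ := Finite.exists_max g
    have := hKp x j p g B hp hp1 hE hB hg hx
    have h2 := mul_le_mul_of_nonneg_right (hKC x j) hB
    linarith [hx i]
  have hzero : ∀ (g : Fin m → ℝ) (B : ℝ), 0 ≤ B → (∀ i, |g i - ∑ j, p i j * g j| ≤ B) →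
      ∑ i, π i * g i = 0 → ∀ i, |g i| ≤ C * B := by
    intro g B hB hg h0 i
    have h1 : g i = ∑ j, π j * (g i - g j) := by
      simp only [mul_sub, Finset.sum_sub_distrib, ← Finset.sum_mul, hπ.2.1, h0, one_mul, sub_zero]
    have hs : ∑ j, π j * (C * B) = C * B := by rw [← Finset.sum_mul, hπ.2.1, one_mul]
    rw [h1, abs_le, ← hs, ← Finset.sum_neg_distrib]
    constructor
    · exact Finset.sum_le_sum fun j _ => by
        have := mul_le_mul_of_nonneg_left (hosc g B hB hg j i) (hπ.1 j); linarith
    · exact Finset.sum_le_sum fun j _ =>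
        mul_le_mul_of_nonneg_left (hosc g B hB hg i j) (hπ.1 j)
  have hstat : ∀ g : Fin m → ℝ, ∑ i, π i * (g i - ∑ j, p i j * g j) = 0 := by
    intro g
    simp only [mul_sub, Finset.sum_sub_distrib, Finset.mul_sum]
    rw [Finset.sum_comm, sub_eq_zero]
    refine Finset.sum_congr rfl fun j _ => ?_
    rw [hπ.2.2 j, Finset.sum_mul]
    exact Finset.sum_congr rfl fun i _ => by ring
  refine ⟨fun i => ?_, ?_⟩
  · obtain ⟨x, hx⟩ := Finite.exists_max π
    have h1 : 1 ≤ m * π x := by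
      calc (1:ℝ) = ∑ i, π i := hπ.2.1.symm
        _ ≤ ∑ i : Fin m, π x := Finset.sum_le_sum fun i _ => hx i
        _ = m * π x := by simp
    have h2 := hcp x i p π hp hE hπ
    have h3 := hxy (x, i)
    simp only at h3
    rw [div_le_iff₀ hm']
    have h4 : c x0 y0 * π x ≤ c x i * π x := mul_le_mul_of_nonneg_right h3 (hπ.1 x)
    have h5 := hc x0 y0
    nlinarith
  · intro f B hB hf hf0
    let T : (Fin m → ℝ) →ₗ[ℝ] (Fin m → ℝ) :=
      { toFun := fun g i => (g i - ∑ j, p i j * g j) + ∑ k, π k * g k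
        map_add' := by
          intro g h; funext i
          simp only [Pi.add_apply, mul_add, Finset.sum_add_distrib]; ring
        map_smul' := by
          intro a g; funext i
          simp only [Pi.smul_apply, smul_eq_mul, RingHom.id_apply, mul_add, mul_sub,
            Finset.mul_sum]
          congr 1
          · congr 1; exact Finset.sum_congr rfl fun j _ => by ring
          · exact Finset.sum_congr rfl fun j _ => by ring }
    have hT : ∀ g, ∑ i, π i * T g i = ∑ k, π k * g k := by
      intro g
      have : ∀ i, T g i = (g i - ∑ j, p i j * g j) + ∑ k, π k * g k := fun i => rfl
      simp only [this, mul_add (π _), Finset.sum_add_distrib, hstat g, ← Finset.sum_mul, hπ.2.1]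
      ring
    have hinj : Function.Injective T := by
      rw [injective_iff_map_eq_zero]
      intro g hg
      have h0 : ∑ k, π k * g k = 0 := by rw [← hT g, hg]; simp
      funext i
      have := hzero g 0 le_rfl (fun i => by
        have : T g i = 0 := by rw [hg]; rfl
        change (g i - ∑ j, p i j * g j) + ∑ k, π k * g k = 0 at this
        rw [h0, add_zero] at this
        rw [this]; simp) h0 i
      simpa using this
    obtain ⟨g, hg⟩ := (LinearMap.injective_iff_surjective.1 hinj) f
    have h0 : ∑ k, π k * g k = 0 := by rw [← hT g, hg, hf0]
    have hgf : ∀ i, g i - ∑ j, p i j * g j = f i := by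
      intro i
      have : T g i = f i := by rw [hg]
      change (g i - ∑ j, p i j * g j) + ∑ k, π k * g k = f i at this
      rwa [h0, add_zero] at this
    exact ⟨g, hgf, hzero g B hB (fun i => by rw [hgf i]; exact hf i) h0⟩

/-- Block of the backward recursion. -/
def Phi {m : ℕ} (M : ℝ → Fin m → Fin m → ℝ) (a : ℕ → ℝ) : ℕ → ℕ → Fin m → ℝ
  | _, 0 => fun _ => 1
  | k, L + 1 => Kop (M (a (k + 1))) (Phi M a (k + 1) L)

/-- Transition measures. -/
def muij {m : ℕ} {Ω : Type} [MeasurableSpace Ω] (η : ℕ → Ω → Fin m) (κ : ℕ → Ω → ℝ)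
    (P : Fin m → Measure Ω) (i j : Fin m) : Measure ℝ :=
  ((P i).restrict {ω | η 0 ω = i ∧ η 1 ω = j}).map (κ 1)

/-- Laplace transforms of the transition measures. -/
def Mij {m : ℕ} {Ω : Type} [MeasurableSpace Ω] (η : ℕ → Ω → Fin m) (κ : ℕ → Ω → ℝ)
    (P : Fin m → Measure Ω) (a : ℝ) (i j : Fin m) : ℝ :=
  ∫ x, Real.exp (-(a * x)) ∂(muij η κ P i j)

section prob
variable {m : ℕ} {Ω : Type} [MeasurableSpace Ω] {η : ℕ → Ω → Fin m} {κ : ℕ → Ω → ℝ}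
  {P : Fin m → Measure Ω}

lemma meas_path (hη : ∀ n, Measurable (η n)) (r : ℕ) (I : ℕ → Fin m) :
    MeasurableSet {ω | ∀ k ≤ r, η k ω = I k} := by
  have : {ω | ∀ k ≤ r, η k ω = I k} = ⋂ k, ⋂ (_ : k ≤ r), (η k) ⁻¹' {I k} := by
    ext ω; simp
  rw [this]
  exact MeasurableSet.iInter fun k => MeasurableSet.iInter fun _ =>
    hη k (MeasurableSet.singleton _)

lemma prod_form (hP : ∀ i, IsProbabilityMeasure (P i))
    (hη : ∀ n, Measurable (η n)) (hκ : ∀ n, Measurable (κ n))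
    (Q : Fin m → Fin m → ℝ → ℝ)
    (hMRP : ∀ n : ℕ, ∀ I : ℕ → Fin m, ∀ T : ℕ → ℝ,
      P (I 0) {ω | ∀ k ≤ n, (η k ω = I k ∧ (1 ≤ k → κ k ω ≤ T k))}
        = ENNReal.ofReal (∏ k ∈ Finset.Icc 1 n, Q (I (k - 1)) (I k) (T k)))
    (n : ℕ) (I : ℕ → Fin m) (T : ℕ → ℝ) :
    P (I 0) {ω | ∀ k ≤ n, (η k ω = I k ∧ (1 ≤ k → κ k ω ≤ T k))}
      = ∏ k ∈ Finset.range n, muij η κ P (I k) (I (k + 1)) (Iic (T (k + 1))) := by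
  have hmu : ∀ i j t, muij η κ P i j (Iic t) = ENNReal.ofReal (Q i j t) := by
    intro i j t
    have h1 := hMRP 1 (fun k => if k = 0 then i else j) (fun _ => t)
    simp only [if_true, Finset.Icc_self, Finset.prod_singleton, Nat.sub_self, one_ne_zero,
      if_false] at h1
    rw [← h1, muij, Measure.map_apply (hκ 1) measurableSet_Iic,
      Measure.restrict_apply (hκ 1 measurableSet_Iic)]
    congr 1
    ext ω
    simp only [mem_inter_iff, mem_preimage, mem_Iic, mem_ofPred_eq]
    constructor
    · rintro ⟨h, h0, h1⟩ k hk
      interval_cases k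
      · simpa using h0
      · simpa using ⟨h1, h⟩
    · intro h
      have h0 := h 0 (by norm_num)
      have h1 := h 1 le_rfl
      simp at h0 h1
      exact ⟨h1.2, h0, h1.1⟩
  induction n with
  | zero =>
    rw [hMRP 0 I T]; simp
  | succ n ih =>
    have hs : {ω | ∀ k ≤ n + 1, (η k ω = I k ∧ (1 ≤ k → κ k ω ≤ T k))} ⊆
      {ω | ∀ k ≤ n, (η k ω = I k ∧ (1 ≤ k → κ k ω ≤ T k))} :=
      fun ω h k hk => h k (by omega)
    rw [Finset.prod_range_succ, ← ih, hmu]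
    by_cases hneg : ∏ k ∈ Finset.Icc 1 n, Q (I (k - 1)) (I k) (T k) < 0
    · have h0 : P (I 0) {ω | ∀ k ≤ n, (η k ω = I k ∧ (1 ≤ k → κ k ω ≤ T k))} = 0 := by
        rw [hMRP n I T]; exact ENNReal.ofReal_of_nonpos hneg.le
      rw [h0, zero_mul]
      exact measure_mono_null hs h0
    · rw [hMRP, hMRP, ← ENNReal.ofReal_mul (not_lt.1 hneg), Finset.prod_Icc_succ_top (by omega)]
      simp

lemma start_one (hP : ∀ i, IsProbabilityMeasure (P i))
    (Q : Fin m → Fin m → ℝ → ℝ)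
    (hMRP : ∀ n : ℕ, ∀ I : ℕ → Fin m, ∀ T : ℕ → ℝ,
      P (I 0) {ω | ∀ k ≤ n, (η k ω = I k ∧ (1 ≤ k → κ k ω ≤ T k))}
        = ENNReal.ofReal (∏ k ∈ Finset.Icc 1 n, Q (I (k - 1)) (I k) (T k)))
    (hη : ∀ n, Measurable (η n))
    (i : Fin m) : ∀ᵐ ω ∂(P i), η 0 ω = i := by
  have h := hMRP 0 (fun _ => i) (fun _ => 0)
  have e : {ω | ∀ k ≤ 0, (η k ω = i ∧ (1 ≤ k → κ k ω ≤ (0:ℝ)))} = {ω | η 0 ω = i} := by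
    ext ω
    simp
  rw [e] at h
  simp only [Finset.Icc_eq_empty_of_lt (zero_lt_one), Finset.prod_empty, ENNReal.ofReal_one] at h
  exact (mem_ae_iff_prob_eq_one (hη 0 (MeasurableSet.singleton i))).2 h

lemma path_law (hP : ∀ i, IsProbabilityMeasure (P i))
    (hη : ∀ n, Measurable (η n)) (hκ : ∀ n, Measurable (κ n))
    (Q : Fin m → Fin m → ℝ → ℝ)
    (hMRP : ∀ n : ℕ, ∀ I : ℕ → Fin m, ∀ T : ℕ → ℝ,
      P (I 0) {ω | ∀ k ≤ n, (η k ω = I k ∧ (1 ≤ k → κ k ω ≤ T k))}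
        = ENNReal.ofReal (∏ k ∈ Finset.Icc 1 n, Q (I (k - 1)) (I k) (T k)))
    (n : ℕ) (I : ℕ → Fin m) :
    Measure.pi (fun k : Fin n => muij η κ P (I k) (I (k + 1)))
     = ((P (I 0)).restrict {ω | ∀ k ≤ n, η k ω = I k}).map
        (fun ω (k : Fin n) => κ (k + 1) ω) := by
  have hfin : ∀ i j, IsFiniteMeasure (muij η κ P i j) := fun i j => by
    unfold muij; infer_instance
  have hκm : Measurable (fun ω (k : Fin n) => κ (k + 1) ω) :=
    measurable_pi_lambda _ fun k => hκ _
  refine Measure.pi_eq_generateFrom (C := fun _ => range Iic)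
    (fun _ => (borel_eq_generateFrom_Iic ℝ).symm.trans (BorelSpace.measurable_eq (α := ℝ)).symm)
    (fun _ => isPiSystem_Iic)
    (fun k => ⟨fun l => Iic (l : ℝ), fun l => ⟨_, rfl⟩, fun l => measure_lt_top _ _, ?_⟩) ?_
  · exact iUnion_Iic_of_not_bddAbove_range (by
      rintro ⟨x, hx⟩
      obtain ⟨l, hl⟩ := exists_nat_gt x
      exact absurd (hx ⟨l, rfl⟩) (not_le.2 hl))
  · intro s hs
    choose T hT using hs
    let T' : ℕ → ℝ := fun k => if h : k - 1 < n then T ⟨k - 1, h⟩ else 0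
    have hpf := prod_form hP hη hκ Q hMRP n I T'
    have hsT : ∀ k : Fin n, s k = Iic (T' (k + 1)) := by
      intro k
      rw [← hT k]
      simp [T']
    have hprod : ∏ k : Fin n, muij η κ P (I k) (I (k + 1)) (s k)
        = ∏ k ∈ Finset.range n, muij η κ P (I k) (I (k + 1)) (Iic (T' (k + 1))) := by
      rw [← Fin.prod_univ_eq_prod_range
        (fun k => muij η κ P (I k) (I (k + 1)) (Iic (T' (k + 1)))) n]
      exact Finset.prod_congr rfl fun k _ => by rw [hsT k]
    have hsm : MeasurableSet (univ.pi s) :=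
      MeasurableSet.univ_pi fun k => by rw [hsT k]; exact measurableSet_Iic
    rw [hprod, ← hpf, Measure.map_apply hκm hsm, Measure.restrict_apply (hκm hsm)]
    congr 1
    ext ω
    simp only [mem_inter_iff, mem_preimage, Set.mem_pi, mem_univ, true_implies, mem_ofPred_eq, hsT,
      mem_Iic]
    constructor
    · rintro ⟨h1, h2⟩ k hk
      refine ⟨h2 k hk, fun h1k => ?_⟩
      have := h1 ⟨k - 1, by omega⟩
      simpa [Nat.sub_add_cancel h1k] using this
    · intro h
      exact ⟨fun k => (h (k + 1) (by omega)).2 (by omega), fun k hk => (h k hk).1⟩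

lemma path_laplace (hP : ∀ i, IsProbabilityMeasure (P i))
    (hη : ∀ n, Measurable (η n)) (hκ : ∀ n, Measurable (κ n))
    (Q : Fin m → Fin m → ℝ → ℝ)
    (hMRP : ∀ n : ℕ, ∀ I : ℕ → Fin m, ∀ T : ℕ → ℝ,
      P (I 0) {ω | ∀ k ≤ n, (η k ω = I k ∧ (1 ≤ k → κ k ω ≤ T k))}
        = ENNReal.ofReal (∏ k ∈ Finset.Icc 1 n, Q (I (k - 1)) (I k) (T k)))
    (n : ℕ) (I : ℕ → Fin m) (a : ℕ → ℝ) :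
    ∫ ω in {ω | ∀ k ≤ n, η k ω = I k},
      Real.exp (-(∑ k ∈ Finset.range n, a (k + 1) * κ (k + 1) ω)) ∂(P (I 0))
     = ∏ k ∈ Finset.range n, Mij η κ P (a (k + 1)) (I k) (I (k + 1)) := by
  have hfin : ∀ i j, IsFiniteMeasure (muij η κ P i j) := fun i j => by
    unfold muij; infer_instance
  have hκm : Measurable (fun ω (k : Fin n) => κ (k + 1) ω) :=
    measurable_pi_lambda _ fun k => hκ _
  have h1 := integral_fintype_prod_eq_prod (𝕜 := ℝ)
    (fun (k : Fin n) (x : ℝ) => Real.exp (-(a (k + 1) * x)))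
    (μ := fun k : Fin n => muij η κ P (I k) (I (k + 1)))
  rw [path_law hP hη hκ Q hMRP n I, integral_map hκm.aemeasurable
    (by
      apply Measurable.aestronglyMeasurable
      fun_prop)] at h1
  rw [← Fin.prod_univ_eq_prod_range (fun k => Mij η κ P (a (k + 1)) (I k) (I (k + 1))) n]
  unfold Mij
  rw [← h1]
  congr 1
  funext ω
  rw [← Real.exp_sum, ← Fin.sum_univ_eq_sum_range (fun k => a (k + 1) * κ (k + 1) ω) n,
    Finset.sum_neg_distrib]

lemma back_rec (hP : ∀ i, IsProbabilityMeasure (P i))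
    (hη : ∀ n, Measurable (η n)) (hκ : ∀ n, Measurable (κ n)) (hκ0 : ∀ n ω, 0 ≤ κ n ω)
    (Q : Fin m → Fin m → ℝ → ℝ)
    (hMRP : ∀ n : ℕ, ∀ I : ℕ → Fin m, ∀ T : ℕ → ℝ,
      P (I 0) {ω | ∀ k ≤ n, (η k ω = I k ∧ (1 ≤ k → κ k ω ≤ T k))}
        = ENNReal.ofReal (∏ k ∈ Finset.Icc 1 n, Q (I (k - 1)) (I k) (T k)))
    (a : ℕ → ℝ) (ha : ∀ k, 0 ≤ a k) (n L : ℕ) : ∀ (r : ℕ) (I : ℕ → Fin m), r + L = n →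
    ∫ ω in {ω | ∀ k ≤ r, η k ω = I k},
      Real.exp (-(∑ k ∈ Finset.range n, a (k + 1) * κ (k + 1) ω)) ∂(P (I 0))
     = (∏ k ∈ Finset.range r, Mij η κ P (a (k + 1)) (I k) (I (k + 1)))
        * Phi (Mij η κ P) a r L (I r) := by
  have hint : ∀ i, Integrable
      (fun ω => Real.exp (-(∑ k ∈ Finset.range n, a (k + 1) * κ (k + 1) ω))) (P i) := by
    intro i
    refine Integrable.of_bound (C := 1) (Measurable.aestronglyMeasurable (by fun_prop)) ?_
    filter_upwards with ω
    rw [Real.norm_eq_abs, abs_of_pos (Real.exp_pos _), Real.exp_le_one_iff, neg_nonpos]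
    exact Finset.sum_nonneg fun k _ => mul_nonneg (ha _) (hκ0 _ _)
  induction L with
  | zero =>
    rintro r I rfl
    simp only [Phi, mul_one]
    exact path_laplace hP hη hκ Q hMRP _ I a
  | succ L ih =>
    intro r I hr
    let I' : Fin m → ℕ → Fin m := fun j k => if k = r + 1 then j else I k
    have hI'0 : ∀ j, I' j 0 = I 0 := fun j => by simp [I']
    have hI'le : ∀ j k, k ≤ r → I' j k = I k := fun j k hk => by
      simp only [I']; rw [if_neg (by omega)]
    have hI's : ∀ j, I' j (r + 1) = j := fun j => by simp [I']
    have hset : {ω | ∀ k ≤ r, η k ω = I k} = ⋃ j, {ω | ∀ k ≤ r + 1, η k ω = I' j k} := by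
      ext ω
      simp only [mem_ofPred_eq, mem_iUnion]
      constructor
      · intro h
        refine ⟨η (r + 1) ω, fun k hk => ?_⟩
        rcases Nat.lt_or_ge r k with h' | h'
        · obtain rfl : k = r + 1 := by omega
          rw [hI's]
        · rw [hI'le _ _ h', h k h']
      · rintro ⟨j, h⟩ k hk
        rw [h k (by omega), hI'le _ _ hk]
    rw [hset, integral_iUnion_fintype (fun j => meas_path hη _ _) ?_
      (fun j => (hint _).integrableOn)]
    · simp only [Phi, Kop, Finset.mul_sum]
      refine Finset.sum_congr rfl fun j _ => ?_
      have := ih (r + 1) (I' j) (by omega)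
      rw [hI'0] at this
      rw [this, Finset.prod_range_succ, hI's, hI'le j r le_rfl, mul_assoc]
      congr 1
      refine Finset.prod_congr rfl fun k hk => ?_
      have := Finset.mem_range.1 hk
      rw [hI'le _ _ (by omega), hI'le _ _ (by omega)]
    · intro j j' hjj'
      rw [Function.onFun, Set.disjoint_left]
      intro ω h1 h2
      have e1 := h1 (r + 1) le_rfl
      have e2 := h2 (r + 1) le_rfl
      rw [hI's] at e1 e2
      exact hjj' (e1.symm.trans e2)

lemma laplace_Phi (hP : ∀ i, IsProbabilityMeasure (P i))
    (hη : ∀ n, Measurable (η n)) (hκ : ∀ n, Measurable (κ n)) (hκ0 : ∀ n ω, 0 ≤ κ n ω)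
    (Q : Fin m → Fin m → ℝ → ℝ)
    (hMRP : ∀ n : ℕ, ∀ I : ℕ → Fin m, ∀ T : ℕ → ℝ,
      P (I 0) {ω | ∀ k ≤ n, (η k ω = I k ∧ (1 ≤ k → κ k ω ≤ T k))}
        = ENNReal.ofReal (∏ k ∈ Finset.Icc 1 n, Q (I (k - 1)) (I k) (T k)))
    (a : ℕ → ℝ) (ha : ∀ k, 0 ≤ a k) (n : ℕ) (i : Fin m) :
    ∫ ω, Real.exp (-(∑ k ∈ Finset.range n, a (k + 1) * κ (k + 1) ω)) ∂(P i)
     = Phi (Mij η κ P) a 0 n i := by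
  have h := back_rec hP hη hκ hκ0 Q hMRP a ha n n 0 (fun _ => i) (by omega)
  simp only [Finset.range_zero, Finset.prod_empty, one_mul] at h
  rw [← h]
  have : (P i).restrict {ω | ∀ k ≤ 0, η k ω = i} = P i := by
    apply Measure.restrict_eq_self_of_ae_mem
    filter_upwards [start_one hP Q hMRP hη i] with ω hω
    simpa using hω
  rw [this]

lemma Mij_eq (hP : ∀ i, IsProbabilityMeasure (P i))
    (hη : ∀ n, Measurable (η n)) (hκ : ∀ n, Measurable (κ n))
    (Q : Fin m → Fin m → ℝ → ℝ)
    (hMRP : ∀ n : ℕ, ∀ I : ℕ → Fin m, ∀ T : ℕ → ℝ,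
      P (I 0) {ω | ∀ k ≤ n, (η k ω = I k ∧ (1 ≤ k → κ k ω ≤ T k))}
        = ENNReal.ofReal (∏ k ∈ Finset.Icc 1 n, Q (I (k - 1)) (I k) (T k)))
    (a : ℝ) (i j : Fin m) :
    Mij η κ P a i j = ∫ ω in {ω | η 1 ω = j}, Real.exp (-(a * κ 1 ω)) ∂(P i) := by
  unfold Mij muij
  rw [integral_map (hκ 1).aemeasurable (Measurable.aestronglyMeasurable (by fun_prop))]
  congr 1
  apply Measure.restrict_congr_set
  filter_upwards [start_one hP Q hMRP hη i] with ω hω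
  apply propext
  change (η 0 ω = i ∧ η 1 ω = j) ↔ (η 1 ω = j)
  simp [hω]

lemma Mij_props (hP : ∀ i, IsProbabilityMeasure (P i))
    (hη : ∀ n, Measurable (η n)) (hκ : ∀ n, Measurable (κ n)) (hκ0 : ∀ n ω, 0 ≤ κ n ω)
    (Q : Fin m → Fin m → ℝ → ℝ)
    (hMRP : ∀ n : ℕ, ∀ I : ℕ → Fin m, ∀ T : ℕ → ℝ,
      P (I 0) {ω | ∀ k ≤ n, (η k ω = I k ∧ (1 ≤ k → κ k ω ≤ T k))}
        = ENNReal.ofReal (∏ k ∈ Finset.Icc 1 n, Q (I (k - 1)) (I k) (T k)))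
    (a : ℝ) (ha : 0 ≤ a) :
    (∀ i j, 0 ≤ Mij η κ P a i j) ∧
    (∀ i j, Mij η κ P a i j ≤ (P i {ω | η 1 ω = j}).toReal) ∧
    (∀ i, ∑ j, Mij η κ P a i j = ∫ ω, Real.exp (-(a * κ 1 ω)) ∂(P i)) ∧
    (∀ i, ∑ j, (P i {ω | η 1 ω = j}).toReal = 1) := by
  have hle : ∀ ω, Real.exp (-(a * κ 1 ω)) ≤ 1 := fun ω => by
    rw [Real.exp_le_one_iff, neg_nonpos]; exact mul_nonneg ha (hκ0 _ _)
  have hκ1 := hκ 1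
  have hint : ∀ i, Integrable (fun ω => Real.exp (-(a * κ 1 ω))) (P i) := by
    intro i
    refine Integrable.of_bound (C := 1) (Measurable.aestronglyMeasurable (by fun_prop)) ?_
    filter_upwards with ω
    rw [Real.norm_eq_abs, abs_of_pos (Real.exp_pos _)]
    exact hle ω
  have hm1 : ∀ j, MeasurableSet {ω | η 1 ω = j} := fun j => hη 1 (MeasurableSet.singleton j)
  have hun : (⋃ j, {ω | η 1 ω = j}) = univ := by ext ω; simp
  have hdis : Pairwise (Function.onFun Disjoint fun j => {ω | η 1 ω = j}) := by
    intro j j' hjj'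
    rw [Function.onFun, Set.disjoint_left]
    intro ω h1 h2
    exact hjj' (h1.symm.trans h2)
  have hsum : ∀ (i : Fin m) (f : Ω → ℝ), Integrable f (P i) →
      ∑ j, ∫ ω in {ω | η 1 ω = j}, f ω ∂(P i) = ∫ ω, f ω ∂(P i) := by
    intro i f hf
    rw [← integral_iUnion_fintype hm1 hdis (fun j => hf.integrableOn), hun,
      Measure.restrict_univ]
  have hone : ∀ i j, ∫ ω in {ω | η 1 ω = j}, (1:ℝ) ∂(P i) = (P i {ω | η 1 ω = j}).toReal := by
    intro i j
    simp [Measure.real]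
  refine ⟨fun i j => ?_, fun i j => ?_, fun i => ?_, fun i => ?_⟩
  · exact integral_nonneg fun x => (Real.exp_pos _).le
  · rw [Mij_eq hP hη hκ Q hMRP, ← hone]
    exact integral_mono (hint i).integrableOn (integrable_const _) hle
  · simp only [Mij_eq hP hη hκ Q hMRP]
    exact hsum i _ (hint i)
  · simp only [← hone]
    rw [hsum i _ (integrable_const _)]
    simp

lemma Phi_block (M : ℝ → Fin m → Fin m → ℝ) (a : ℕ → ℝ) (s : ℝ) (L c : ℕ) : ∀ k : ℕ,
    (∀ l, k < l → l ≤ k + c → a l = s) →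
    Phi M a k (c + L) = (Kop (M s))^[c] (Phi M a (k + c) L) := by
  induction c with
  | zero => intro k _; simp
  | succ c ih =>
    intro k h
    rw [Function.iterate_succ_apply', show c + 1 + L = (c + L) + 1 by omega, Phi,
      h (k + 1) (by omega) (by omega), ih (k + 1) (fun l h1 h2 => h l (by omega) (by omega)),
      show k + 1 + c = k + (c + 1) by omega]

end prob

/-- Piecewise constant coefficients. -/
def acoef (N : ℕ → ℕ) (n : ℕ) (s : ℕ → ℝ) (l : ℕ) : ℝ :=
  ∑ r ∈ Finset.Icc 1 n, if N (r - 1) < l ∧ l ≤ N r then s r else 0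

lemma N_mono {N : ℕ → ℕ} {n : ℕ} (hN : ∀ r < n, N r ≤ N (r + 1)) {r r' : ℕ}
    (h : r ≤ r') (h' : r' ≤ n) : N r ≤ N r' := by
  induction r', h using Nat.le_induction with
  | base => exact le_rfl
  | succ k hk ih => exact (ih (by omega)).trans (hN k (by omega))

lemma acoef_nonneg {N : ℕ → ℕ} {n : ℕ} {s : ℕ → ℝ} (hs : ∀ r, 0 ≤ s r) (l : ℕ) :
    0 ≤ acoef N n s l :=
  Finset.sum_nonneg fun r _ => by split_ifs <;> simp [hs]

lemma acoef_eq {N : ℕ → ℕ} {n : ℕ} (hN : ∀ r < n, N r ≤ N (r + 1)) {s : ℕ → ℝ} {r l : ℕ}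
    (hr : r < n) (h1 : N r < l) (h2 : l ≤ N (r + 1)) : acoef N n s l = s (r + 1) := by
  unfold acoef
  rw [Finset.sum_eq_single (r + 1)]
  · simp [h1, h2]
  · intro q hq hne
    rw [Finset.mem_Icc] at hq
    rw [if_neg]
    rintro ⟨h3, h4⟩
    rcases Nat.lt_or_ge q (r + 1) with h | h
    · have := N_mono hN (show q ≤ r by omega) (by omega)
      omega
    · have := N_mono hN (show r + 1 ≤ q - 1 by omega) (by omega)
      omega
  · intro h
    exact absurd (Finset.mem_Icc.2 ⟨by omega, by omega⟩) h

lemma sum_Icc_one_range (x : ℕ → ℝ) (n : ℕ) :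
    ∑ k ∈ Finset.Icc 1 n, x k = ∑ k ∈ Finset.range n, x (k + 1) := by
  induction n with
  | zero => simp
  | succ n ih => rw [Finset.sum_Icc_succ_top (by omega), ih, Finset.sum_range_succ]

lemma exponent_eq {N : ℕ → ℕ} {n : ℕ} (hN : ∀ r < n, N r ≤ N (r + 1)) (s x : ℕ → ℝ) :
    ∑ k ∈ Finset.range (N n), acoef N n s (k + 1) * x (k + 1)
     = ∑ r ∈ Finset.Icc 1 n, s r * (∑ k ∈ Finset.Icc 1 (N r), x k
        - ∑ k ∈ Finset.Icc 1 (N (r - 1)), x k) := by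
  simp only [acoef, Finset.sum_mul]
  rw [Finset.sum_comm]
  refine Finset.sum_congr rfl fun r hr => ?_
  rw [Finset.mem_Icc] at hr
  have h1 : N (r - 1) ≤ N r := N_mono hN (by omega) hr.2
  have h2 : N r ≤ N n := N_mono hN hr.2 le_rfl
  rw [sum_Icc_one_range, sum_Icc_one_range, ← Finset.sum_Ico_eq_sub _ h1, Finset.mul_sum]
  simp only [ite_mul, zero_mul]
  rw [← Finset.sum_filter]
  refine Finset.sum_congr ?_ fun k _ => rfl
  ext k
  simp only [Finset.mem_filter, Finset.mem_range, Finset.mem_Ico]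
  omega

lemma pow_lim {l : Filter ℝ} {b : ℝ → ℝ} {n : ℝ → ℕ} {c : ℝ} (hb0 : ∀ᶠ ε in l, 0 ≤ b ε)
    (hb : Tendsto b l (𝓝 0)) (hn : Tendsto (fun ε => n ε * b ε) l (𝓝 c)) :
    Tendsto (fun ε => (1 - b ε) ^ n ε) l (𝓝 (Real.exp (-c))) := by
  have hup : Tendsto (fun ε => Real.exp (-(n ε * b ε))) l (𝓝 (Real.exp (-c))) :=
    (Real.continuous_exp.tendsto _).comp hn.neg
  have hlo : Tendsto (fun ε => Real.exp (-(n ε * b ε / (1 - b ε)))) l (𝓝 (Real.exp (-c))) := by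
    have h1 : Tendsto (fun ε => 1 - b ε) l (𝓝 (1 - 0)) := tendsto_const_nhds.sub hb
    have h2 := hn.div h1 (by norm_num)
    rw [sub_zero, div_one] at h2
    exact (Real.continuous_exp.tendsto _).comp h2.neg
  have hb1 : ∀ᶠ ε in l, b ε < 1 := hb.eventually_lt_const one_pos
  refine tendsto_of_tendsto_of_tendsto_of_le_of_le' hlo hup ?_ ?_
  · filter_upwards [hb0, hb1] with ε h0 h1
    have h2 : 0 < 1 - b ε := by linarith
    have h3 : Real.exp (-(b ε / (1 - b ε))) ≤ 1 - b ε := by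
      rw [Real.exp_neg]
      apply inv_le_of_inv_le₀ h2
      have := Real.add_one_le_exp (b ε / (1 - b ε))
      refine le_trans (le_of_eq ?_) this
      field_simp
      ring
    calc Real.exp (-(n ε * b ε / (1 - b ε))) = Real.exp (-(b ε / (1 - b ε))) ^ n ε := by
          rw [← Real.exp_nat_mul]; congr 1; ring
      _ ≤ _ := pow_le_pow_left₀ (Real.exp_pos _).le h3 _
  · filter_upwards [hb0, hb1] with ε h0 h1
    calc (1 - b ε) ^ n ε ≤ Real.exp (-b ε) ^ n ε :=
          pow_le_pow_left₀ (by linarith) (Real.one_sub_le_exp_neg _) _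
      _ = _ := by rw [← Real.exp_nat_mul]; congr 1; ring

lemma uniform_tendsto {m : ℕ} {l : Filter ℝ} {V : ℝ → Fin m → ℝ} {c : ℝ}
    (h : ∀ i, Tendsto (fun ε => V ε i) l (𝓝 c)) :
    Tendsto (fun ε => ∑ i, |V ε i - c|) l (𝓝 0) := by
  have : Tendsto (fun ε => ∑ i, |V ε i - c|) l (𝓝 (∑ i : Fin m, 0)) := by
    refine tendsto_finsetSum _ fun i _ => ?_
    have := ((h i).sub_const c).abs
    simpa using this
  simpa using this

/-- Theorem 2 (iii): under conditions B and D₁ the step-sum reward processes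
`κ_ε(·)` converge in finite-dimensional distributions to a nonnegative Lévy process with
Laplace transforms `E e^{−sθ₀(t)} = e^{−tA(s)}`. -/
theorem stmt5 {m : ℕ} (hm : 0 < m) (ε₀ : ℝ) (hε₀ : 0 < ε₀)
    {Ω : Type} [MeasurableSpace Ω]
    (η : ℝ → ℕ → Ω → Fin m) (κ : ℝ → ℕ → Ω → ℝ)
    (Pstart : ℝ → Fin m → Measure Ω)
    (hprob : ∀ ε i, IsProbabilityMeasure (Pstart ε i))
    (hmeas : ∀ ε n, Measurable (η ε n) ∧ Measurable (κ ε n))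
    (hκnn : ∀ ε n ω, 0 ≤ κ ε n ω)
    (Q : ℝ → Fin m → Fin m → ℝ → ℝ)
    (hMRP : ∀ ε ∈ Ioc (0:ℝ) ε₀, ∀ n : ℕ, ∀ I : ℕ → Fin m, ∀ T : ℕ → ℝ,
      Pstart ε (I 0) {ω | ∀ k ≤ n, (η ε k ω = I k ∧ (1 ≤ k → κ ε k ω ≤ T k))}
        = ENNReal.ofReal (∏ k ∈ Finset.Icc 1 n, Q ε (I (k - 1)) (I k) (T k)))
    (p : ℝ → Fin m → Fin m → ℝ)
    (hp : ∀ ε ∈ Ioc (0:ℝ) ε₀, ∀ i j, p ε i j = (Pstart ε i {ω | η ε 1 ω = j}).toReal)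
    (hB : CondB p)
    (π : ℝ → Fin m → ℝ)
    (hπ : ∀ᶠ ε in 𝓝[>] (0:ℝ), IsStationaryDist (fun i j => p ε i j) (π ε))
    -- arbitrary family of initial distributions
    (q : ℝ → Fin m → ℝ) (Pq : ℝ → Measure Ω)
    (hq : ∀ ε ∈ Ioc (0:ℝ) ε₀, (∀ i, 0 ≤ q ε i) ∧ ∑ i, q ε i = 1)
    (hmix : ∀ ε ∈ Ioc (0:ℝ) ε₀, Pq ε = ∑ i, ENNReal.ofReal (q ε i) • Pstart ε i)
    (v : ℝ → ℝ) (hvpos : ∀ ε ∈ Ioc (0:ℝ) ε₀, 0 < v ε)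
    (hvinf : Tendsto v (𝓝[>] (0:ℝ)) atTop)
    -- condition D₁, together with the canonical value A(0) = 0 of the cumulant
    (A : ℝ → ℝ)
    (hD : ∀ s > 0, Tendsto
      (fun ε => v ε * (1 - ∑ i, π ε i * ∫ ω, Real.exp (-(s * κ ε 1 ω)) ∂(Pstart ε i)))
      (𝓝[>] (0:ℝ)) (𝓝 (A s)))
    (hApos : ∀ s > 0, 0 < A s)
    (hA0 : Tendsto A (𝓝[>] (0:ℝ)) (𝓝 0))
    (hAzero : A 0 = 0) :
    ∀ n : ℕ, ∀ t : ℕ → ℝ, t 0 = 0 → (∀ r < n, t r ≤ t (r + 1)) →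
    ∀ s : ℕ → ℝ, (∀ r, 0 ≤ s r) →
    Tendsto
      (fun ε => ∫ ω, Real.exp (-(∑ r ∈ Finset.Icc 1 n,
        s r * (stepSum κ v ε (t r) ω - stepSum κ v ε (t (r - 1)) ω))) ∂(Pq ε))
      (𝓝[>] (0:ℝ))
      (𝓝 (Real.exp (-(∑ r ∈ Finset.Icc 1 n, A (s r) * (t r - t (r - 1)))))) := by

  intro n t ht0 htm s hs
  have hIoc : ∀ᶠ ε in 𝓝[>] (0:ℝ), ε ∈ Ioc (0:ℝ) ε₀ := Ioc_mem_nhdsGT hε₀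
  have hη : ∀ ε k, Measurable (η ε k) := fun ε k => (hmeas ε k).1
  have hκ : ∀ ε k, Measurable (κ ε k) := fun ε k => (hmeas ε k).2
  let M : ℝ → ℝ → Fin m → Fin m → ℝ := fun ε => Mij (η ε) (κ ε) (Pstart ε)
  have hprops : ∀ ε ∈ Ioc (0:ℝ) ε₀, ∀ a, 0 ≤ a →
      (∀ i j, 0 ≤ M ε a i j) ∧ (∀ i j, M ε a i j ≤ p ε i j) ∧
      (∀ i, ∑ j, M ε a i j = ∫ ω, Real.exp (-(a * κ ε 1 ω)) ∂(Pstart ε i)) ∧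
      (∀ i, ∑ j, p ε i j = 1) := by
    intro ε hε a ha
    simp only [hp ε hε]
    exact Mij_props (hprob ε) (hη ε) (hκ ε) (hκnn ε) (Q ε) (hMRP ε hε) a ha
  have hp0 : ∀ ε ∈ Ioc (0:ℝ) ε₀, ∀ i j, 0 ≤ p ε i j := fun ε hε i j => by
    rw [hp ε hε]; exact ENNReal.toReal_nonneg
  -- ergodicity constants
  obtain ⟨ρ, C, hρ, hC, herg⟩ : ∃ ρ C : ℝ, 0 < ρ ∧ 0 ≤ C ∧ ∀ᶠ ε in 𝓝[>] (0:ℝ),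
      (∀ i, ρ ≤ π ε i) ∧
      ∀ f : Fin m → ℝ, ∀ B, 0 ≤ B → (∀ i, |f i| ≤ B) → ∑ i, π ε i * f i = 0 →
      ∃ g : Fin m → ℝ, (∀ i, g i - ∑ j, p ε i j * g j = f i) ∧ ∀ i, |g i| ≤ C * B := by
    obtain ⟨N, hN0, c, hcN, hall, hlim⟩ := hB
    have hδk : ∃ δ : ℝ, 0 < δ ∧ ∀ k < N,
        δ < Filter.liminf (fun ε => p ε (c k) (c (k + 1))) (𝓝[>] (0 : ℝ)) := by
      obtain ⟨k0, hk0, hmin⟩ := Finset.exists_min_image (Finset.range N)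
        (fun k => Filter.liminf (fun ε => p ε (c k) (c (k + 1))) (𝓝[>] (0 : ℝ)))
        ⟨0, Finset.mem_range.2 hN0⟩
      have hpos := hlim k0 (Finset.mem_range.1 hk0)
      refine ⟨_, half_pos hpos, fun k hk => ?_⟩
      have := hmin k (Finset.mem_range.2 hk)
      exact lt_of_lt_of_le (half_lt_self hpos) this
    obtain ⟨δ, hδ, hδl⟩ := hδk
    obtain ⟨ρ, C, hρ, hC, h⟩ := ergodic_consts hm (E := ringE N c) hδ (ring_conn hcN hall)
    refine ⟨ρ, C, hρ, hC, ?_⟩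
    have hev : ∀ᶠ ε in 𝓝[>] (0:ℝ), ∀ k ∈ Finset.range N, δ < p ε (c k) (c (k + 1)) := by
      rw [Filter.eventually_all_finset]
      intro k hk
      refine eventually_lt_of_lt_liminf (hδl k (Finset.mem_range.1 hk)) ?_
      refine ⟨0, ?_⟩
      rw [Filter.eventually_map]
      filter_upwards [hIoc] with ε hε
      exact hp0 ε hε _ _
    filter_upwards [hev, hIoc, hπ] with ε h1 h2 h3
    refine h (p ε) (π ε) (hp0 ε h2) (hprops ε h2 0 le_rfl).2.2.2 ?_ h3
    rintro i j ⟨k, hk, rfl, rfl⟩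
    exact (h1 k (Finset.mem_range.2 hk)).le
  -- block limits
  let b : ℝ → ℝ → ℝ := fun a ε =>
    1 - ∑ i, π ε i * ∫ ω, Real.exp (-(a * κ ε 1 ω)) ∂(Pstart ε i)
  have hvb : ∀ a, 0 ≤ a → Tendsto (fun ε => v ε * b a ε) (𝓝[>] (0:ℝ)) (𝓝 (A a)) := by
    intro a ha
    rcases ha.eq_or_lt with rfl | ha
    · rw [hAzero]
      refine Tendsto.congr' ?_ tendsto_const_nhds
      filter_upwards [hπ] with ε hε
      have := hprob ε
      simp [b, hε.2.1]
    · exact hD a ha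
  have hvinv : Tendsto (fun ε => (v ε)⁻¹) (𝓝[>] (0:ℝ)) (𝓝 0) := hvinf.inv_tendsto_atTop
  have hb0 : ∀ a, 0 ≤ a → Tendsto (b a) (𝓝[>] (0:ℝ)) (𝓝 0) := by
    intro a ha
    have := hvinv.mul (hvb a ha)
    rw [zero_mul] at this
    refine this.congr' ?_
    filter_upwards [hIoc] with ε hε
    have := (hvpos ε hε).ne'
    field_simp
  have hblock : ∀ a, 0 ≤ a → ∀ (c : ℝ → ℕ) (τ : ℝ),
      Tendsto (fun ε => (c ε : ℝ) / v ε) (𝓝[>] (0:ℝ)) (𝓝 τ) → ∀ i,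
      Tendsto (fun ε => (Kop (M ε a))^[c ε] (fun _ => 1) i) (𝓝[>] (0:ℝ))
        (𝓝 (Real.exp (-(A a * τ)))) := by
    intro a ha c τ hc i
    have hcb : Tendsto (fun ε => c ε * b a ε) (𝓝[>] (0:ℝ)) (𝓝 (A a * τ)) := by
      have := (hvb a ha).mul hc
      refine this.congr' ?_
      filter_upwards [hIoc] with ε hε
      have := (hvpos ε hε).ne'
      field_simp
    have hest : ∀ᶠ ε in 𝓝[>] (0:ℝ), 0 ≤ b a ε ∧ b a ε ≤ 1 ∧
        |(Kop (M ε a))^[c ε] (fun _ => 1) i - (1 - b a ε) ^ c ε|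
          ≤ c ε * (2 * C * (b a ε / ρ) ^ 2) + 2 * C * (b a ε / ρ) := by
      filter_upwards [hIoc, hπ, herg] with ε h1 h2 h3
      obtain ⟨g1, g2, g3, g4⟩ := hprops ε h1 a ha
      exact pow_est (p ε) (M ε a) (π ε) g4 g1 g2 h2 ρ C hρ hC h3.1 h3.2 (b a ε)
        (by simp only [b, g3]) (c ε) i
    have hpl := pow_lim (hest.mono fun _ h => h.1) (hb0 a ha) hcb
    have herr : Tendsto (fun ε => c ε * (2 * C * (b a ε / ρ) ^ 2) + 2 * C * (b a ε / ρ))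
        (𝓝[>] (0:ℝ)) (𝓝 0) := by
      have h1 := ((hcb.mul (hb0 a ha)).mul_const (2 * C / ρ ^ 2)).add
        ((hb0 a ha).mul_const (2 * C / ρ))
      simp only [mul_zero, zero_mul, add_zero] at h1
      refine h1.congr fun ε => ?_
      field_simp
    have hdiff : Tendsto (fun ε => (Kop (M ε a))^[c ε] (fun _ => 1) i - (1 - b a ε) ^ c ε)
        (𝓝[>] (0:ℝ)) (𝓝 0) :=
      squeeze_zero_norm' (hest.mono fun ε h => by rw [Real.norm_eq_abs]; exact h.2.2) herr
    have := hdiff.add hpl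
    simpa using this
  -- the partition
  let Nn : ℝ → ℕ → ℕ := fun ε r => Nat.floor (t r * v ε)
  have hNm : ∀ ε ∈ Ioc (0:ℝ) ε₀, ∀ r < n, Nn ε r ≤ Nn ε (r + 1) := fun ε hε r hr =>
    Nat.floor_mono (mul_le_mul_of_nonneg_right (htm r hr) (hvpos ε hε).le)
  have htnn : ∀ r ≤ n, 0 ≤ t r := by
    intro r
    induction r with
    | zero => intro _; rw [ht0]
    | succ r ih => intro h; exact (ih (by omega)).trans (htm r (by omega))
  have hNlim : ∀ r ≤ n, Tendsto (fun ε => (Nn ε r : ℝ) / v ε) (𝓝[>] (0:ℝ)) (𝓝 (t r)) :=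
    fun r hr => (tendsto_nat_floor_mul_div_atTop (htnn r hr)).comp hvinf
  have hclim : ∀ r < n, Tendsto (fun ε => ((Nn ε (r + 1) - Nn ε r : ℕ) : ℝ) / v ε)
      (𝓝[>] (0:ℝ)) (𝓝 (t (r + 1) - t r)) := by
    intro r hr
    refine ((hNlim (r + 1) hr).sub (hNlim r hr.le)).congr' ?_
    filter_upwards [hIoc] with ε hε
    rw [Nat.cast_sub (hNm ε hε r hr), sub_div]
  have hPhi : ∀ d j, j + d ≤ n → ∀ i, Tendsto
      (fun ε => Phi (M ε) (acoef (Nn ε) n s) (Nn ε j) (Nn ε (j + d) - Nn ε j) i)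
      (𝓝[>] (0:ℝ))
      (𝓝 (Real.exp (-(∑ r ∈ Finset.Ico j (j + d), A (s (r + 1)) * (t (r + 1) - t r))))) := by
    intro d
    induction d with
    | zero => intro j _ i; simp [Phi]
    | succ d ih =>
      intro j hj i
      have ih' := ih (j + 1) (by omega)
      set W : ℝ := Real.exp (-(∑ r ∈ Finset.Ico (j + 1) (j + 1 + d),
        A (s (r + 1)) * (t (r + 1) - t r))) with hW
      let V : ℝ → Fin m → ℝ := fun ε =>
        Phi (M ε) (acoef (Nn ε) n s) (Nn ε (j + 1)) (Nn ε (j + 1 + d) - Nn ε (j + 1))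
      have hu := uniform_tendsto (V := V) ih'
      have h1 := (hblock (s (j + 1)) (hs _) _ _ (hclim j (by omega)) i).const_mul W
      have hval : W * Real.exp (-(A (s (j + 1)) * (t (j + 1) - t j)))
          = Real.exp (-(∑ r ∈ Finset.Ico j (j + (d + 1)), A (s (r + 1)) * (t (r + 1) - t r))) := by
        rw [Finset.sum_eq_sum_Ico_succ_bot (by omega), hW, ← Real.exp_add,
          show j + (d + 1) = j + 1 + d by omega]
        congr 1; ring
      rw [hval] at h1
      have h2 : Tendsto (fun ε =>
          (Kop (M ε (s (j + 1))))^[Nn ε (j + 1) - Nn ε j] (fun k => 1 * V ε k + (-W) * 1) i)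
          (𝓝[>] (0:ℝ)) (𝓝 0) := by
        refine squeeze_zero_norm' ?_ hu
        filter_upwards [hIoc] with ε hε
        obtain ⟨g1, g2, g3, g4⟩ := hprops ε hε (s (j + 1)) (hs _)
        rw [Real.norm_eq_abs]
        refine Kop_iter_bound ⟨g1, fun i => ?_⟩ (Finset.sum_nonneg fun _ _ => abs_nonneg _)
          (fun k => ?_) _ i
        · rw [← g4 i]; exact Finset.sum_le_sum fun j _ => g2 i j
        · have := Finset.single_le_sum (f := fun k => |V ε k - W|)
            (fun _ _ => abs_nonneg _) (Finset.mem_univ k)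
          simpa [sub_eq_add_neg] using this
      have h3 := h2.add h1
      rw [zero_add] at h3
      refine h3.congr' ?_
      filter_upwards [hIoc] with ε hε
      have e1 : Nn ε j ≤ Nn ε (j + 1) := hNm ε hε j (by omega)
      have e2 : Nn ε (j + 1) ≤ Nn ε (j + 1 + d) := N_mono (hNm ε hε) (by omega) (by omega)
      have e3 := Phi_block (M ε) (acoef (Nn ε) n s) (s (j + 1))
        (Nn ε (j + 1 + d) - Nn ε (j + 1)) (Nn ε (j + 1) - Nn ε j) (Nn ε j)
        (fun l h1 h2 => acoef_eq (hNm ε hε) (show j < n by omega) h1 (by omega))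
      rw [Kop_iter_lin, show j + (d + 1) = j + 1 + d by omega,
        show Nn ε (j + 1 + d) - Nn ε j = (Nn ε (j + 1) - Nn ε j)
          + (Nn ε (j + 1 + d) - Nn ε (j + 1)) by omega, e3,
        show Nn ε j + (Nn ε (j + 1) - Nn ε j) = Nn ε (j + 1) by omega]
      simp only [V]
      ring
  -- assemble
  have hfin := hPhi n 0 (by omega)
  have hsumeq : ∑ r ∈ Finset.Ico 0 (0 + n), A (s (r + 1)) * (t (r + 1) - t r)
      = ∑ r ∈ Finset.Icc 1 n, A (s r) * (t r - t (r - 1)) := by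
    rw [sum_Icc_one_range (fun r => A (s r) * (t r - t (r - 1))), zero_add, Finset.range_eq_Ico]
    simp
  rw [hsumeq] at hfin
  set W := Real.exp (-(∑ r ∈ Finset.Icc 1 n, A (s r) * (t r - t (r - 1)))) with hW
  have hu := uniform_tendsto hfin
  rw [tendsto_iff_norm_sub_tendsto_zero]
  refine squeeze_zero' (Eventually.of_forall fun _ => norm_nonneg _) ?_ hu
  filter_upwards [hIoc] with ε hε
  obtain ⟨hq0, hq1⟩ := hq ε hε
  have hN0 : Nn ε 0 = 0 := by simp [Nn, ht0]
  have hexp : ∀ ω, ∑ r ∈ Finset.Icc 1 n,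
        s r * (stepSum κ v ε (t r) ω - stepSum κ v ε (t (r - 1)) ω)
      = ∑ k ∈ Finset.range (Nn ε n), acoef (Nn ε) n s (k + 1) * κ ε (k + 1) ω := fun ω =>
    (exponent_eq (hNm ε hε) s (fun k => κ ε k ω)).symm
  have hκ' := hκ ε
  have hint : ∀ i, Integrable (fun ω => Real.exp (-(∑ k ∈ Finset.range (Nn ε n),
      acoef (Nn ε) n s (k + 1) * κ ε (k + 1) ω))) (Pstart ε i) := by
    intro i
    have := hprob ε i
    refine Integrable.of_bound (C := 1) (Measurable.aestronglyMeasurable (by fun_prop)) ?_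
    filter_upwards with ω
    rw [Real.norm_eq_abs, abs_of_pos (Real.exp_pos _), Real.exp_le_one_iff, neg_nonpos]
    exact Finset.sum_nonneg fun k _ => mul_nonneg (acoef_nonneg hs _) (hκnn _ _ _)
  have hI : ∫ ω, Real.exp (-(∑ r ∈ Finset.Icc 1 n,
        s r * (stepSum κ v ε (t r) ω - stepSum κ v ε (t (r - 1)) ω))) ∂(Pq ε)
      = ∑ i, q ε i * Phi (M ε) (acoef (Nn ε) n s) (Nn ε 0) (Nn ε (0 + n) - Nn ε 0) i := by
    simp only [hexp]
    rw [hmix ε hε, integral_finsetSum_measure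
      (fun i _ => (hint i).smul_measure ENNReal.ofReal_ne_top)]
    refine Finset.sum_congr rfl fun i _ => ?_
    rw [integral_smul_measure, ENNReal.toReal_ofReal (hq0 i), smul_eq_mul,
      laplace_Phi (hprob ε) (hη ε) (hκ ε) (hκnn ε) (Q ε) (hMRP ε hε) _ (acoef_nonneg hs) _ i,
      hN0, zero_add, Nat.sub_zero]
  rw [hI, Real.norm_eq_abs]
  have hWs : W = ∑ i, q ε i * W := by rw [← Finset.sum_mul, hq1, one_mul]
  have hqle : ∀ i, q ε i ≤ 1 := fun i => by
    rw [← hq1]; exact Finset.single_le_sum (fun i _ => hq0 i) (Finset.mem_univ i)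
  conv_lhs => rw [hWs]
  rw [← Finset.sum_sub_distrib]
  refine (Finset.abs_sum_le_sum_abs _ _).trans (Finset.sum_le_sum fun i _ => ?_)
  rw [← mul_sub, abs_mul, abs_of_nonneg (hq0 i)]
  exact mul_le_of_le_one_left (abs_nonneg _) (hqle i)
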